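/- arXiv:1812.00153 — 3 statements merged into one kernel-verified Lean document; each statement's English description precedes it below -/
import Mathlib

section
/- Let C > 0 be fixed. Then for every dimension d ≥ 1 and every real number N ≥ Cd, the number of lattice points in the Euclidean ball of radius N satisfies #(B²_N ∩ ℤ^d) ≤ 2 e^{1/(8C²)} |B²_N|, where |B²_N| is the Lebesgue measure of the Euclidean ball of radius N. -/
open MeasureTheory ENNReal

/-!
Attach to each lattice point `y` in the ball of radius `N` the half of the unit cube centred at `y`
that faces the origin. These half-cubes are disjoint and have volume at least `1 / 2`, and the angle
at `y` being non-obtuse, Pythagoras puts them in the ball of radius `√(N² + d / 4)`, where `√d / 2`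
is the circumradius of the cube. Passing from that ball to the ball of radius `N` costs a factor
`(1 + d / (4 N²)) ^ (d / 2) ≤ exp (d² / (8 N²))`, and `d / N ≤ 1 / C`.
-/

open Metric Module
open scoped InnerProductSpace Pointwise

theorem measure_le_two_mul_measure_inter_nonpos_of_odd {G α : Type*} [AddGroup G]
    [MeasurableSpace G] [MeasurableNeg G] (μ : Measure G) [μ.IsNegInvariant] [AddCommGroup α]
    [LinearOrder α] [IsOrderedAddMonoid α] {s : Set G} (hs : -s = s) {f : G → α}
    (hf : Function.Odd f) :
    μ s ≤ 2 * μ (s ∩ {x | f x ≤ 0}) := by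
  have cover : s ⊆ (s ∩ {x | f x ≤ 0}) ∪ -(s ∩ {x | f x ≤ 0}) := by
    intro x hx
    rcases le_total (f x) 0 with hfx | hfx
    · exact Or.inl ⟨hx, hfx⟩
    · refine Or.inr ⟨Set.mem_neg.1 (hs.symm ▸ hx), ?_⟩
      simpa only [Set.mem_ofPred_eq, hf x, neg_nonpos] using hfx
  calc μ s ≤ μ ((s ∩ {x | f x ≤ 0}) ∪ -(s ∩ {x | f x ≤ 0})) := measure_mono cover
    _ ≤ μ (s ∩ {x | f x ≤ 0}) + μ (-(s ∩ {x | f x ≤ 0})) := measure_union_le _ _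
    _ = 2 * μ (s ∩ {x | f x ≤ 0}) := by rw [Measure.measure_neg, two_mul]

section InnerProductSpace

variable {V : Type*} [NormedAddCommGroup V] [InnerProductSpace ℝ V]

theorem norm_add_le_sqrt_of_inner_nonpos {x y : V} {r s : ℝ} (hx : ‖x‖ ^ 2 ≤ r)
    (hy : ‖y‖ ^ 2 ≤ s) (hxy : ⟪x, y⟫_ℝ ≤ 0) : ‖x + y‖ ≤ √(r + s) := by
  refine Real.le_sqrt_of_sq_le ?_
  calc ‖x + y‖ ^ 2 = ‖x‖ ^ 2 + 2 * ⟪x, y⟫_ℝ + ‖y‖ ^ 2 := norm_add_sq_real x y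
    _ ≤ r + s := by linarith

theorem card_mul_measure_le_of_pairwise_disjoint_vadd [MeasurableSpace V] [BorelSpace V]
    (μ : Measure V) [μ.IsAddLeftInvariant] [μ.IsNegInvariant] {α : Type*} {c : α → V} {F : Set V}
    {r s : ℝ} (hF : MeasurableSet F) (hF_neg : -F = F) (hF_norm : ∀ x ∈ F, ‖x‖ ^ 2 ≤ s)
    (hc : ∀ a, ‖c a‖ ^ 2 ≤ r) (hdisj : Pairwise fun a b => Disjoint (c a +ᵥ F) (c b +ᵥ F)) :
    ENat.card α * μ F ≤ 2 * μ (closedBall 0 √(r + s)) := by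
  let H : α → Set V := fun a => F ∩ {x | ⟪c a, x⟫_ℝ ≤ 0}
  have H_large (a : α) : μ F ≤ 2 * μ (c a +ᵥ H a) := by
    rw [measure_vadd]
    exact measure_le_two_mul_measure_inter_nonpos_of_odd μ hF_neg fun x => inner_neg_right _ _
  have H_measurable (a : α) : MeasurableSet (c a +ᵥ H a) :=
    (hF.inter (isClosed_le (by fun_prop) (by fun_prop)).measurableSet).const_vadd _
  have H_disjoint : Pairwise (Function.onFun Disjoint fun a => c a +ᵥ H a) := fun a b hab =>
    (hdisj hab).mono (Set.vadd_set_mono Set.inter_subset_left)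
      (Set.vadd_set_mono Set.inter_subset_left)
  have H_subset : ⋃ a, (c a +ᵥ H a) ⊆ closedBall 0 √(r + s) := by
    refine Set.iUnion_subset fun a => ?_
    rintro _ ⟨x, ⟨hxF, hx⟩, rfl⟩
    exact mem_closedBall_zero_iff.2 (norm_add_le_sqrt_of_inner_nonpos (hc a) (hF_norm x hxF) hx)
  calc ENat.card α * μ F = ∑' _ : α, μ F := (ENNReal.tsum_const _).symm
    _ ≤ ∑' a, 2 * μ (c a +ᵥ H a) := ENNReal.tsum_le_tsum H_large
    _ = 2 * ∑' a, μ (c a +ᵥ H a) := ENNReal.tsum_mul_left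
    _ ≤ 2 * μ (⋃ a, (c a +ᵥ H a)) := by
      gcongr
      exact tsum_meas_le_meas_iUnion_of_disjoint μ H_measurable H_disjoint
    _ ≤ 2 * μ (closedBall 0 √(r + s)) := by gcongr

end InnerProductSpace

theorem sqrt_sq_add_le_exp_mul {a : ℝ} (ha : 0 < a) (s : ℝ) :
    √(a ^ 2 + s) ≤ Real.exp (s / (2 * a ^ 2)) * a := by
  refine Real.sqrt_le_iff.2 ⟨by positivity, ?_⟩
  calc a ^ 2 + s = (s / a ^ 2 + 1) * a ^ 2 := by field_simp; ring
    _ ≤ Real.exp (s / a ^ 2) * a ^ 2 := by gcongr; exact Real.add_one_le_exp _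
    _ = (Real.exp (s / (2 * a ^ 2)) * a) ^ 2 := by
      rw [mul_pow, ← Real.exp_nat_mul]
      congr 2
      push_cast
      field_simp

theorem addHaar_closedBall_sqrt_sq_add_le {E : Type*} [NormedAddCommGroup E] [NormedSpace ℝ E]
    [MeasurableSpace E] [BorelSpace E] [FiniteDimensional ℝ E] (μ : Measure E)
    [μ.IsAddHaarMeasure] {N : ℝ} (hN : 0 < N) (s : ℝ) :
    μ (closedBall 0 √(N ^ 2 + s)) ≤
      ENNReal.ofReal (Real.exp (finrank ℝ E * s / (2 * N ^ 2))) * μ (closedBall 0 N) := by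
  calc μ (closedBall 0 √(N ^ 2 + s))
      ≤ μ (closedBall 0 (Real.exp (s / (2 * N ^ 2)) * N)) :=
        measure_mono (closedBall_subset_closedBall (sqrt_sq_add_le_exp_mul hN s))
    _ = ENNReal.ofReal (Real.exp (finrank ℝ E * s / (2 * N ^ 2))) * μ (closedBall 0 N) := by
      rw [Measure.addHaar_closedBall_mul μ 0 (Real.exp_nonneg _) hN.le, ← Real.exp_nat_mul,
        mul_div_assoc]

section Cube

variable {ι : Type*} [Fintype ι]

variable (ι) in
/-- The open unit cube `(-1/2, 1/2)^ι` in Euclidean space, encoded as the ball of radius `1 / 2` for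
the supremum norm. It is the cell whose translates by integer points are packed. -/
def centeredUnitCube : Set (EuclideanSpace ℝ ι) :=
  WithLp.ofLp ⁻¹' ball (0 : ι → ℝ) (1 / 2)

theorem mem_centeredUnitCube {x : EuclideanSpace ℝ ι} :
    x ∈ centeredUnitCube ι ↔ ∀ i, |x i| < 1 / 2 := by
  simp only [centeredUnitCube, Set.mem_preimage, mem_ball_zero_iff,
    pi_norm_lt_iff one_half_pos, Real.norm_eq_abs]

theorem measurableSet_centeredUnitCube : MeasurableSet (centeredUnitCube ι) :=
  (PiLp.volume_preserving_ofLp ι).measurable measurableSet_ball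

theorem volume_centeredUnitCube : volume (centeredUnitCube ι) = 1 := by
  rw [centeredUnitCube, (PiLp.volume_preserving_ofLp ι).measure_preimage
    measurableSet_ball.nullMeasurableSet, Real.volume_pi_ball _ one_half_pos]
  norm_num

theorem neg_centeredUnitCube : -centeredUnitCube ι = centeredUnitCube ι := by
  ext x
  simp only [Set.mem_neg, mem_centeredUnitCube, PiLp.neg_apply, abs_neg]

theorem norm_sq_le_of_mem_centeredUnitCube {x : EuclideanSpace ℝ ι}
    (hx : x ∈ centeredUnitCube ι) : ‖x‖ ^ 2 ≤ Fintype.card ι / 4 := by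
  have sq_coord_le (i : ι) : x i ^ 2 ≤ 1 / 4 := by
    calc x i ^ 2 = |x i| ^ 2 := (sq_abs _).symm
      _ ≤ (1 / 2) ^ 2 := by gcongr; exact (mem_centeredUnitCube.1 hx i).le
      _ = 1 / 4 := by norm_num
  calc ‖x‖ ^ 2 = ∑ i, x i ^ 2 := EuclideanSpace.real_norm_sq_eq x
    _ ≤ ∑ _i : ι, (1 / 4 : ℝ) := Finset.sum_le_sum fun i _ => sq_coord_le i
    _ = Fintype.card ι / 4 := by
      rw [Finset.sum_const, Finset.card_univ, nsmul_eq_mul, mul_one_div]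

/-- The point of Euclidean space with the given integer coordinates. -/
def intPoint (y : ι → ℤ) : EuclideanSpace ℝ ι :=
  WithLp.toLp 2 fun i => (y i : ℝ)

theorem norm_intPoint_sq (y : ι → ℤ) : ‖intPoint y‖ ^ 2 = ∑ i, (y i : ℝ) ^ 2 :=
  EuclideanSpace.real_norm_sq_eq _

theorem disjoint_intPoint_vadd_centeredUnitCube {y z : ι → ℤ} (hyz : y ≠ z) :
    Disjoint (intPoint y +ᵥ centeredUnitCube ι) (intPoint z +ᵥ centeredUnitCube ι) := by
  rw [Set.disjoint_left]
  rintro _ ⟨u, hu, rfl⟩ ⟨v, hv, hvu⟩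
  refine hyz (funext fun i => sub_eq_zero.1 (Int.abs_lt_one_iff.1 ?_))
  have coord : (z i : ℝ) + v i = y i + u i := congrArg (fun x => x.ofLp i) hvu
  have close : |(y i : ℝ) - z i| < 1 := by
    calc |(y i : ℝ) - z i| = |v i - u i| := by congr 1; linarith
      _ ≤ |v i| + |u i| := abs_sub _ _
      _ < 1 := by linarith [mem_centeredUnitCube.1 hu i, mem_centeredUnitCube.1 hv i]
  exact_mod_cast close

theorem card_int_sum_sq_le_le_volume_closedBall_sqrt (r : ℝ) :
    (ENat.card {y : ι → ℤ // ∑ i, (y i : ℝ) ^ 2 ≤ r} : ℝ≥0∞) ≤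
      2 * volume (closedBall (0 : EuclideanSpace ℝ ι) √(r + Fintype.card ι / 4)) := by
  have packing := card_mul_measure_le_of_pairwise_disjoint_vadd volume
    (c := fun y : {y : ι → ℤ // ∑ i, (y i : ℝ) ^ 2 ≤ r} => intPoint y.1)
    measurableSet_centeredUnitCube neg_centeredUnitCube
    (fun _ => norm_sq_le_of_mem_centeredUnitCube)
    (fun y => (norm_intPoint_sq y.1).trans_le y.2)
    (fun _ _ hyz => disjoint_intPoint_vadd_centeredUnitCube (Subtype.coe_injective.ne hyz))
  rwa [volume_centeredUnitCube, mul_one] at packing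

theorem card_int_sum_sq_le_le_exp_mul_volume_closedBall {N : ℝ} (hN : 0 < N) :
    (ENat.card {y : ι → ℤ // ∑ i, (y i : ℝ) ^ 2 ≤ N ^ 2} : ℝ≥0∞) ≤
      ENNReal.ofReal (2 * Real.exp (Fintype.card ι ^ 2 / (8 * N ^ 2))) *
        volume (closedBall (0 : EuclideanSpace ℝ ι) N) := by
  have exponent : (Fintype.card ι : ℝ) * (Fintype.card ι / 4) / (2 * N ^ 2) =
      Fintype.card ι ^ 2 / (8 * N ^ 2) := by
    field_simp
    ring
  refine (card_int_sum_sq_le_le_volume_closedBall_sqrt (N ^ 2)).trans ?_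
  rw [ENNReal.ofReal_mul zero_le_two, ENNReal.ofReal_ofNat, mul_assoc]
  gcongr
  simpa only [finrank_euclideanSpace, exponent] using
    addHaar_closedBall_sqrt_sq_add_le (volume : Measure (EuclideanSpace ℝ ι)) hN
      (Fintype.card ι / 4)

end Cube

/-- Let `C > 0`. For every dimension `d ≥ 1` and every real `N ≥ Cd`, the number of lattice
points in the Euclidean ball `B²_N` is at most `2 e^{1/(8C²)} |B²_N|`. -/
theorem statement16 (C : ℝ) (hC : 0 < C) (d : ℕ) (hd : 1 ≤ d) (N : ℝ)
    (hN : C * d ≤ N) :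
    (Nat.card {y : Fin d → ℤ // (∑ i, ((y i : ℝ)) ^ 2) ≤ N ^ 2} : ℝ≥0∞)
      ≤ ENNReal.ofReal (2 * Real.exp (1 / (8 * C ^ 2))) *
          volume (Metric.closedBall (0 : EuclideanSpace ℝ (Fin d)) N) := by
  have hCd : 0 < C * d := by positivity
  have exponent_le : (d : ℝ) ^ 2 / (8 * N ^ 2) ≤ 1 / (8 * C ^ 2) := by
    calc (d : ℝ) ^ 2 / (8 * N ^ 2) ≤ d ^ 2 / (8 * (C * d) ^ 2) := by gcongr
      _ = 1 / (8 * C ^ 2) := by field_simp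
  calc (Nat.card {y : Fin d → ℤ // (∑ i, ((y i : ℝ)) ^ 2) ≤ N ^ 2} : ℝ≥0∞)
      ≤ ENat.card {y : Fin d → ℤ // (∑ i, ((y i : ℝ)) ^ 2) ≤ N ^ 2} :=
        ENat.toENNReal_le.2 (ENat.natCast_toNat_le_self _)
    _ ≤ ENNReal.ofReal (2 * Real.exp (d ^ 2 / (8 * N ^ 2))) *
          volume (Metric.closedBall (0 : EuclideanSpace ℝ (Fin d)) N) := by
      simpa only [Fintype.card_fin] using
        card_int_sum_sq_le_le_exp_mul_volume_closedBall (ι := Fin d) (hCd.trans_le hN)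
    _ ≤ ENNReal.ofReal (2 * Real.exp (1 / (8 * C ^ 2))) *
          volume (Metric.closedBall (0 : EuclideanSpace ℝ (Fin d)) N) := by gcongr
end

section
/- Let C > 0 be fixed, let d ≥ 1, let N ≥ Cd be a real number, and let t > 0. Then for every x ∈ ℝ^d with |x|₂ ≥ N(1 + t/N)^{1/2} one has |Q ∩ (B²_N − x)| = |{y ∈ Q : x + y ∈ B²_N}| ≤ 2 e^{−ct²}, where c = (7/32) · C²/(C+1)². -/
open MeasureTheory

/-!
Expanding the square, `‖x + y‖ ≤ N` forces `⟪-x, y⟫ ≥ (‖x‖² - N²) / 2`, so the part of the cube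
lying in the translated ball is contained in a half-space far from the origin, whose measure in the
cube is at most `exp (-(‖x‖² - N²)² / (2‖x‖²))` by Hoeffding's inequality. If `‖x‖` is so large
that this exponent deteriorates, namely `‖x‖ > N + √d / 2`, the ball misses the cube altogether.
-/

open ProbabilityTheory Real
open scoped NNReal RealInnerProductSpace

section Hoeffding

variable {ι : Type*} [Fintype ι]

lemma measureReal_pi_weighted_sum_ge_le {μ : ι → Measure ℝ} [∀ i, IsProbabilityMeasure (μ i)]
    {c : ι → ℝ≥0} (hμ : ∀ i, HasSubgaussianMGF id (c i) (μ i)) (a : ι → ℝ) {s : ℝ} (hs : 0 ≤ s) :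
    (Measure.pi μ).real {y | s ≤ ∑ i, a i * y i} ≤ exp (-s ^ 2 / (2 * ∑ i, a i ^ 2 * c i)) := by
  have hindep : iIndepFun (fun i (y : ι → ℝ) ↦ a i * y i) (Measure.pi μ) :=
    iIndepFun_pi (X := fun i z ↦ a i * z) fun i ↦ by fun_prop
  have hcoord (i : ι) : HasSubgaussianMGF (fun y : ι → ℝ ↦ y i) (c i) (Measure.pi μ) := by
    have heval := measurePreserving_eval μ i
    exact (HasSubgaussianMGF.id_map_iff heval.measurable.aemeasurable).1 (heval.map_eq ▸ hμ i)
  have hterm (i : ι) : HasSubgaussianMGF (fun y : ι → ℝ ↦ a i * y i)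
      (.mk (a i ^ 2) (sq_nonneg _) * c i) (Measure.pi μ) := (hcoord i).const_mul (a i)
  simpa only [NNReal.coe_sum, NNReal.coe_mul, NNReal.coe_mk] using
    HasSubgaussianMGF.measure_sum_ge_le_of_iIndepFun hindep (s := Finset.univ)
      (fun i _ ↦ hterm i) hs

instance isProbabilityMeasure_volume_restrict_Icc_neg_half_half :
    IsProbabilityMeasure (volume.restrict (Set.Icc (-(1 / 2) : ℝ) (1 / 2))) :=
  ⟨by norm_num⟩

lemma hasSubgaussianMGF_id_volume_restrict_Icc_neg_half_half :
    HasSubgaussianMGF id (1 / 4) (volume.restrict (Set.Icc (-(1 / 2) : ℝ) (1 / 2))) := by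
  have hmean : ∫ z in Set.Icc (-(1 / 2) : ℝ) (1 / 2), id z = 0 := by
    rw [integral_Icc_eq_integral_Ioc, ← intervalIntegral.integral_of_le (by norm_num)]
    simp
  have hvariance : (1 / 4 : ℝ≥0) = (‖(1 / 2 : ℝ) - -(1 / 2)‖₊ / 2) ^ 2 := by
    ext
    norm_num
  rw [hvariance]
  exact hasSubgaussianMGF_of_mem_Icc_of_integral_eq_zero aemeasurable_id
    (ae_restrict_mem measurableSet_Icc) hmean

end Hoeffding

section UnitCube

variable {ι : Type*}

/-- The cube `[-1/2, 1/2]^ι`, as a subset of Euclidean space so that it can be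
intersected with Euclidean balls. -/
def unitCube (ι : Type*) : Set (EuclideanSpace ℝ ι) :=
  {y | ∀ i, y i ∈ Set.Icc (-(1 / 2) : ℝ) (1 / 2)}

variable [Fintype ι]

lemma norm_le_of_mem_unitCube {y : EuclideanSpace ℝ ι} (hy : y ∈ unitCube ι) :
    ‖y‖ ≤ √(Fintype.card ι) / 2 := by
  have hcoord (i : ι) : y i ^ 2 ≤ (1 / 2) ^ 2 := sq_le_sq' (hy i).1 (hy i).2
  refine le_of_sq_le_sq ?_ (by positivity)
  calc ‖y‖ ^ 2 = ∑ i, y i ^ 2 := EuclideanSpace.real_norm_sq_eq y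
    _ ≤ ∑ _i : ι, (1 / 2 : ℝ) ^ 2 := Finset.sum_le_sum fun i _ ↦ hcoord i
    _ = (√(Fintype.card ι) / 2) ^ 2 := by
      rw [div_pow √_, sq_sqrt (Nat.cast_nonneg _), Finset.sum_const, Finset.card_univ,
        nsmul_eq_mul]
      ring

lemma volume_unitCube_inter_halfSpace_le (a : EuclideanSpace ℝ ι) {s : ℝ} (hs : 0 ≤ s) :
    volume {y ∈ unitCube ι | s ≤ ⟪a, y⟫} ≤ ENNReal.ofReal (exp (-(2 * s ^ 2 / ‖a‖ ^ 2))) := by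
  set μ : Measure ℝ := volume.restrict (Set.Icc (-(1 / 2)) (1 / 2))
  set H : Set (ι → ℝ) := {y | s ≤ ∑ i, a i * y i}
  have hH : MeasurableSet H := measurableSet_le (by fun_prop) (by fun_prop)
  have hcube : MeasurableSet (Set.univ.pi fun _ : ι ↦ Set.Icc (-(1 / 2) : ℝ) (1 / 2)) :=
    .univ_pi fun _ ↦ measurableSet_Icc
  have hpreimage : {y ∈ unitCube ι | s ≤ ⟪a, y⟫} =
      WithLp.ofLp ⁻¹' (H ∩ Set.univ.pi fun _ ↦ Set.Icc (-(1 / 2)) (1 / 2)) := by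
    ext y
    simp only [unitCube, H, PiLp.inner_apply, RCLike.inner_apply', conj_trivial,
      Set.mem_ofPred_eq, Set.mem_preimage, Set.mem_inter_iff, Set.mem_univ_pi]
    exact and_comm
  have hexponent : -s ^ 2 / (2 * ∑ i, a i ^ 2 * ((1 / 4 : ℝ≥0) : ℝ)) =
      -(2 * s ^ 2 / ‖a‖ ^ 2) := by
    rw [← Finset.sum_mul, ← EuclideanSpace.real_norm_sq_eq]
    push_cast
    ring
  calc volume {y ∈ unitCube ι | s ≤ ⟪a, y⟫}
      = volume (H ∩ Set.univ.pi fun _ ↦ Set.Icc (-(1 / 2)) (1 / 2)) := by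
        rw [hpreimage, (PiLp.volume_preserving_ofLp ι).measure_preimage
          (hH.inter hcube).nullMeasurableSet]
    _ = Measure.pi (fun _ ↦ μ) H := by
        rw [← Measure.restrict_apply hH, volume_pi, Measure.restrict_pi_pi]
    _ = ENNReal.ofReal ((Measure.pi fun _ ↦ μ).real H) := by rw [ofReal_measureReal]
    _ ≤ ENNReal.ofReal (exp (-(2 * s ^ 2 / ‖a‖ ^ 2))) := by
        rw [← hexponent]
        exact ENNReal.ofReal_le_ofReal <| measureReal_pi_weighted_sum_ge_le
          (fun _ ↦ hasSubgaussianMGF_id_volume_restrict_Icc_neg_half_half) a hs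

end UnitCube

lemma le_inner_neg_of_norm_add_le {E : Type*} [NormedAddCommGroup E] [InnerProductSpace ℝ E]
    {x y : E} {N : ℝ} (h : ‖x + y‖ ≤ N) : (‖x‖ ^ 2 - N ^ 2) / 2 ≤ ⟪-x, y⟫ := by
  have hsq : ‖x + y‖ ^ 2 ≤ N ^ 2 := pow_le_pow_left₀ (norm_nonneg _) h 2
  rw [norm_add_sq_real] at hsq
  rw [inner_neg_left]
  linarith [sq_nonneg ‖y‖]

lemma sq_add_mul_le_sq_of_mul_sqrt_le {N t r : ℝ} (hN : 0 < N) (ht : 0 ≤ t)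
    (hr : N * √(1 + t / N) ≤ r) : N ^ 2 + t * N ≤ r ^ 2 :=
  calc N ^ 2 + t * N = (N * √(1 + t / N)) ^ 2 := by
        rw [mul_pow, sq_sqrt (by positivity)]
        field_simp
    _ ≤ r ^ 2 := pow_le_pow_left₀ (by positivity) hr 2

section Ball

variable {ι : Type*} [Fintype ι]

lemma volume_unitCube_inter_closedBall_le (x : EuclideanSpace ℝ ι) {N : ℝ}
    (hx : N ^ 2 ≤ ‖x‖ ^ 2) :
    volume {y ∈ unitCube ι | x + y ∈ Metric.closedBall 0 N} ≤
      ENNReal.ofReal (exp (-((‖x‖ ^ 2 - N ^ 2) ^ 2 / (2 * ‖x‖ ^ 2)))) := by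
  have hsub : {y ∈ unitCube ι | x + y ∈ Metric.closedBall 0 N} ⊆
      {y ∈ unitCube ι | (‖x‖ ^ 2 - N ^ 2) / 2 ≤ ⟪-x, y⟫} := fun y ⟨hy, hxy⟩ ↦
    ⟨hy, le_inner_neg_of_norm_add_le (mem_closedBall_zero_iff.1 hxy)⟩
  have hhalf := volume_unitCube_inter_halfSpace_le (-x)
    (s := (‖x‖ ^ 2 - N ^ 2) / 2) (by linarith)
  refine (measure_mono hsub).trans (hhalf.trans_eq ?_)
  rw [norm_neg]
  ring_nf

theorem statement17_general {N t : ℝ} (hN : 0 < N) (ht : 0 ≤ t) (x : EuclideanSpace ℝ ι)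
    (hx : N * √(1 + t / N) ≤ ‖x‖) :
    volume {y ∈ unitCube ι | x + y ∈ Metric.closedBall 0 N} ≤
      ENNReal.ofReal (exp (-((N / (N + √(Fintype.card ι) / 2)) ^ 2 / 2 * t ^ 2))) := by
  rcases Set.eq_empty_or_nonempty {y ∈ unitCube ι | x + y ∈ Metric.closedBall 0 N} with
    hempty | ⟨y, hy, hxy⟩
  · rw [hempty, measure_empty]
    exact zero_le
  have hsq : N ^ 2 + t * N ≤ ‖x‖ ^ 2 := sq_add_mul_le_sq_of_mul_sqrt_le hN ht hx
  have hxpos : 0 < ‖x‖ := lt_of_lt_of_le (by positivity) hx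
  have hnorm : ‖x‖ ≤ N + √(Fintype.card ι) / 2 :=
    calc ‖x‖ ≤ ‖x + y‖ + ‖y‖ := norm_le_add_norm_add x y
      _ ≤ N + √(Fintype.card ι) / 2 :=
        add_le_add (mem_closedBall_zero_iff.1 hxy) (norm_le_of_mem_unitCube hy)
  have hexponent : (N / (N + √(Fintype.card ι) / 2)) ^ 2 / 2 * t ^ 2 ≤
      (‖x‖ ^ 2 - N ^ 2) ^ 2 / (2 * ‖x‖ ^ 2) :=
    calc (N / (N + √(Fintype.card ι) / 2)) ^ 2 / 2 * t ^ 2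
        ≤ (N / ‖x‖) ^ 2 / 2 * t ^ 2 := by gcongr
      _ = (t * N) ^ 2 / (2 * ‖x‖ ^ 2) := by ring
      _ ≤ (‖x‖ ^ 2 - N ^ 2) ^ 2 / (2 * ‖x‖ ^ 2) := by
        gcongr
        linarith
  have htN : 0 ≤ t * N := by positivity
  refine (volume_unitCube_inter_closedBall_le x (by linarith)).trans ?_
  gcongr

end Ball

lemma div_add_one_le_div_add {C N r : ℝ} (hC : 0 ≤ C) (hN : 0 < N) (hr : 0 ≤ r)
    (hCr : C * r ≤ N) : C / (C + 1) ≤ N / (N + r) := by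
  rw [div_le_div_iff₀ (by positivity) (by positivity)]
  linarith

lemma exp_neg_sq_div_add_sqrt_half_le {C N : ℝ} {d : ℕ} (hC : 0 ≤ C) (hN : 0 < N)
    (hCN : C * d ≤ N) (t : ℝ) :
    exp (-((N / (N + √d / 2)) ^ 2 / 2 * t ^ 2)) ≤
      2 * exp (-(7 / 32 * C ^ 2 / (C + 1) ^ 2) * t ^ 2) := by
  have hsqrt : √(d : ℝ) ≤ d := by
    rw [sqrt_le_left (Nat.cast_nonneg d)]
    exact_mod_cast Nat.le_self_pow two_ne_zero d
  have hradius : C * (√d / 2) ≤ N :=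
    calc C * (√d / 2) ≤ C * d := by
          gcongr
          linarith [sqrt_nonneg (d : ℝ)]
      _ ≤ N := hCN
  have hratio : C / (C + 1) ≤ N / (N + √d / 2) :=
    div_add_one_le_div_add hC hN (by positivity) hradius
  have hconst : 7 / 32 * C ^ 2 / (C + 1) ^ 2 ≤ (N / (N + √d / 2)) ^ 2 / 2 :=
    calc 7 / 32 * C ^ 2 / (C + 1) ^ 2 = 7 / 32 * (C / (C + 1)) ^ 2 := by
          rw [div_pow, mul_div_assoc]
      _ ≤ 1 / 2 * (N / (N + √d / 2)) ^ 2 := by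
          gcongr ?_ * ?_ ^ 2
          norm_num
      _ = (N / (N + √d / 2)) ^ 2 / 2 := by ring
  calc exp (-((N / (N + √d / 2)) ^ 2 / 2 * t ^ 2))
      ≤ exp (-(7 / 32 * C ^ 2 / (C + 1) ^ 2) * t ^ 2) := by
        rw [neg_mul]
        gcongr
    _ ≤ 2 * exp (-(7 / 32 * C ^ 2 / (C + 1) ^ 2) * t ^ 2) :=
        le_mul_of_one_le_left (exp_pos _).le one_le_two

/-- Let `C > 0`, `d ≥ 1`, `N ≥ Cd` and `t > 0`. For every `x ∈ ℝ^d` with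
`|x| ≥ N(1 + t/N)^{1/2}` one has `|Q ∩ (B²_N - x)| ≤ 2 e^{-ct²}` where
`Q = [-1/2, 1/2]^d` and `c = (7/32) C²/(C+1)²`. -/
theorem statement17 (C : ℝ) (hC : 0 < C) (d : ℕ) (hd : 1 ≤ d) (N t : ℝ)
    (hN : C * d ≤ N) (ht : 0 < t) (x : EuclideanSpace ℝ (Fin d))
    (hx : N * Real.sqrt (1 + t / N) ≤ ‖x‖) :
    volume {y : EuclideanSpace ℝ (Fin d) |
        (∀ i, y i ∈ Set.Icc (-(1 / 2) : ℝ) (1 / 2)) ∧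
          x + y ∈ Metric.closedBall (0 : EuclideanSpace ℝ (Fin d)) N}
      ≤ ENNReal.ofReal (2 * Real.exp (-(7 / 32 * C ^ 2 / (C + 1) ^ 2) * t ^ 2)) := by
  have hNpos : 0 < N := lt_of_lt_of_le (by positivity) hN
  have hexp := exp_neg_sq_div_add_sqrt_half_le hC.le hNpos hN t
  rw [← Fintype.card_fin d] at hexp
  exact (statement17_general hNpos ht.le x hx).trans (ENNReal.ofReal_le_ofReal hexp)
end

section
/- There exist absolute constants C₁, C₂ > 0, independent of the dimension, such that for every dimension d ≥ 1 and every real number N ≥ C₁ d, the Lebesgue measure of the Euclidean ball of radius N is controlled by its lattice point count: |B²_N| ≤ C₂ · #(B²_N ∩ ℤ^d). -/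
open MeasureTheory ENNReal

/-!
Round a point `x` of a ball of radius `M` to the lattice point `y` with coordinates
`⌊x i + u i⌋`, where `u` is uniform on the unit cube. The rounding is unbiased, so
`∑ i, x i * y i` has mean `|x|²` and variance at most `|x|² / 4`, and Chebyshev's inequality
gives `|y|² ≤ 2 ⟨x, y⟩ - |x|² + d ≤ M² + 2 M + d` with probability at least `3 / 4`. For fixed
`u` each lattice point is hit by a set of `x` of volume one, so averaging over `u` (Fubini) shows
that three quarters of the volume of the ball of radius `M` is at most the number of lattice points
in a ball of radius `√(M² + 2 M + d)`. The choice `M = N - 2` is admissible once `N ≥ d / 2`, and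
for `N ≥ 4 d` it costs only a bounded factor of volume, as `(1 + 1 / d) ^ d ≤ e`.
-/

section FloorAdd

open ProbabilityTheory unitInterval

lemma intervalIntegrable_fract (a b : ℝ) :
    IntervalIntegrable (Int.fract : ℝ → ℝ) volume a b := by
  refine IntervalIntegrable.mono_fun' (g := fun _ ↦ 1) (by simp)
    measurable_fract.aestronglyMeasurable (.of_forall fun u ↦ ?_)
  simpa [abs_of_nonneg] using (Int.fract_lt_one u).le

lemma intervalIntegral_fract_add_one (x : ℝ) : ∫ t in x..x + 1, Int.fract t = 1 / 2 := by
  have periodic : Function.Periodic (Int.fract : ℝ → ℝ) 1 := Int.fract_add_one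
  have fract_eq_self : ∀ t ∈ Set.Ioo (0 : ℝ) 1, Int.fract t = t := fun t ht ↦
    Int.fract_eq_self.2 ⟨ht.1.le, ht.2⟩
  calc ∫ t in x..x + 1, Int.fract t
    _ = ∫ t in (0 : ℝ)..1, Int.fract t := by simpa using periodic.intervalIntegral_add_eq x 0
    _ = ∫ t in (0 : ℝ)..1, t := by
        simp only [intervalIntegral.integral_of_le zero_le_one, integral_Ioc_eq_integral_Ioo]
        exact setIntegral_congr_fun measurableSet_Ioo fract_eq_self
    _ = 1 / 2 := by simp

lemma floor_add_mem_Icc (x : ℝ) (u : I) : (⌊x + u⌋ : ℝ) ∈ Set.Icc (⌊x⌋ : ℝ) (⌊x⌋ + 1) := by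
  constructor
  · exact_mod_cast Int.floor_le_floor (le_add_of_nonneg_right u.2.1)
  · exact_mod_cast (Int.floor_le_floor (add_le_add_right u.2.2 x)).trans_eq (Int.floor_add_one x)

lemma sq_floor_add_sub_le_one (x : ℝ) (u : I) : (⌊x + u⌋ - x : ℝ) ^ 2 ≤ 1 := by
  have h := floor_add_mem_Icc x u
  rw [sq_le_one_iff_abs_le_one, abs_le]
  constructor <;> linarith [h.1, h.2, Int.floor_le x, Int.lt_floor_add_one x]

lemma memLp_floor_add (x : ℝ) (p : ℝ≥0∞) : MemLp (fun u : I ↦ (⌊x + u⌋ : ℝ)) p := by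
  refine memLp_of_bounded (.of_forall (floor_add_mem_Icc x)) ?_ p
  exact Measurable.aestronglyMeasurable (by fun_prop)

lemma integral_floor_add (x : ℝ) : ∫ u : I, (⌊x + u⌋ : ℝ) = x := by
  calc ∫ u : I, (⌊x + u⌋ : ℝ)
    _ = ∫ u in (0 : ℝ)..1, (⌊x + u⌋ : ℝ) := by
        rw [intervalIntegral.integral_of_le zero_le_one, ← integral_Icc_eq_integral_Ioc]
        exact integral_subtype measurableSet_Icc fun u ↦ (⌊x + u⌋ : ℝ)
    _ = ∫ t in x..x + 1, (t - Int.fract t) := by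
        simp [intervalIntegral.integral_comp_add_left fun t ↦ (⌊t⌋ : ℝ)]
    _ = x := by
        rw [intervalIntegral.integral_sub (by simp) (intervalIntegrable_fract _ _),
          intervalIntegral_fract_add_one, integral_id]
        ring

lemma variance_floor_add_le (x : ℝ) : Var[fun u : I ↦ (⌊x + u⌋ : ℝ)] ≤ 1 / 4 :=
  (variance_le_sq_of_bounded (.of_forall (floor_add_mem_Icc x))
    (memLp_floor_add x 2).aestronglyMeasurable.aemeasurable).trans_eq (by ring)

end FloorAdd

section RandomRound

open ProbabilityTheory unitInterval

variable {ι : Type*}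

/-- Randomized rounding of the vector `x` to an integer vector: each coordinate is shifted by a
random amount before rounding down. The random source is `u`, which is uniform on the unit cube
for the volume measure of `ι → I`. -/
noncomputable def randomRound (x : ι → ℝ) (u : ι → I) : ι → ℤ := fun i ↦ ⌊x i + u i⌋

lemma measurable_randomRound :
    Measurable fun p : (ι → ℝ) × (ι → I) ↦ randomRound p.1 p.2 := by
  unfold randomRound
  fun_prop

variable [Fintype ι]

section Concentration

lemma memLp_randomRound_apply (x : ι → ℝ) (i : ι) (p : ℝ≥0∞) :
    MemLp (fun u ↦ (randomRound x u i : ℝ)) p :=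
  (memLp_floor_add (x i) p).comp_measurePreserving (measurePreserving_eval (fun _ ↦ volume) i)

lemma integral_randomRound_apply (x : ι → ℝ) (i : ι) : ∫ u, (randomRound x u i : ℝ) = x i :=
  (integral_comp_eval (μ := fun _ : ι ↦ (volume : Measure I)) (f := fun v ↦ (⌊x i + v⌋ : ℝ))
    (memLp_floor_add (x i) 1).aestronglyMeasurable).trans (integral_floor_add (x i))

lemma memLp_sum_mul_randomRound (a x : ι → ℝ) (p : ℝ≥0∞) :
    MemLp (fun u ↦ ∑ i, a i * (randomRound x u i : ℝ)) p :=
  memLp_finsetSum _ fun i _ ↦ (memLp_randomRound_apply x i p).const_mul (a i)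

lemma integral_sum_mul_randomRound (a x : ι → ℝ) :
    ∫ u, ∑ i, a i * (randomRound x u i : ℝ) = ∑ i, a i * x i := by
  rw [integral_finsetSum _ fun i _ ↦
    (memLp_one_iff_integrable.1 (memLp_randomRound_apply x i 1)).const_mul (a i)]
  simp only [integral_const_mul, integral_randomRound_apply]

lemma variance_sum_mul_randomRound_le (a x : ι → ℝ) :
    Var[fun u ↦ ∑ i, a i * (randomRound x u i : ℝ)] ≤ (∑ i, a i ^ 2) / 4 := by
  have variance_sum := variance_sum_pi fun i ↦ (memLp_floor_add (x i) 2).const_mul (a i)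
  calc Var[fun u ↦ ∑ i, a i * (randomRound x u i : ℝ)]
    _ = ∑ i, Var[fun v : I ↦ a i * (⌊x i + v⌋ : ℝ)] := by
        rw [← variance_sum, Finset.sum_fn]
        rfl
    _ ≤ ∑ i, a i ^ 2 * (1 / 4) := by
        gcongr with i
        rw [variance_const_mul]
        gcongr
        exact variance_floor_add_le (x i)
    _ = (∑ i, a i ^ 2) / 4 := by rw [← Finset.sum_mul, mul_one_div]

lemma sum_sq_randomRound_le (x : ι → ℝ) (u : ι → I) :
    ∑ i, (randomRound x u i : ℝ) ^ 2 ≤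
      2 * ∑ i, x i * (randomRound x u i : ℝ) - ∑ i, x i ^ 2 + Fintype.card ι := by
  calc ∑ i, (randomRound x u i : ℝ) ^ 2
    _ = 2 * ∑ i, x i * (randomRound x u i : ℝ) - ∑ i, x i ^ 2 +
          ∑ i, (randomRound x u i - x i : ℝ) ^ 2 := by
        rw [Finset.mul_sum, ← Finset.sum_sub_distrib, ← Finset.sum_add_distrib]
        exact Finset.sum_congr rfl fun i _ ↦ by ring
    _ ≤ 2 * ∑ i, x i * (randomRound x u i : ℝ) - ∑ i, x i ^ 2 + ∑ i : ι, 1 := by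
        gcongr with i
        exact sq_floor_add_sub_le_one (x i) (u i)
    _ = _ := by simp

lemma volume_abs_sum_mul_randomRound_sub_ge_le {x : ι → ℝ} {M : ℝ} (hM : 0 < M)
    (hx : ∑ i, x i ^ 2 ≤ M ^ 2) :
    volume {u | M ≤ |∑ i, x i * (randomRound x u i : ℝ) - ∑ i, x i ^ 2|} ≤
      ENNReal.ofReal (1 / 4) := by
  have chebyshev := meas_ge_le_variance_div_sq (memLp_sum_mul_randomRound x x 2) hM
  simp only [integral_sum_mul_randomRound, ← pow_two] at chebyshev
  refine chebyshev.trans (ENNReal.ofReal_le_ofReal ?_)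
  rw [div_le_iff₀ (by positivity)]
  linarith [variance_sum_mul_randomRound_le x x]

lemma three_quarters_le_volume_sum_sq_randomRound_le {x : ι → ℝ} {M : ℝ} (hM : 0 < M)
    (hx : ∑ i, x i ^ 2 ≤ M ^ 2) :
    ENNReal.ofReal (3 / 4) ≤
      volume {u | ∑ i, (randomRound x u i : ℝ) ^ 2 ≤ M ^ 2 + 2 * M + Fintype.card ι} := by
  set bad := {u | M ≤ |∑ i, x i * (randomRound x u i : ℝ) - ∑ i, x i ^ 2|}
  have measurableSet_bad : MeasurableSet bad := by
    unfold bad randomRound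
    exact measurableSet_le measurable_const (by fun_prop)
  calc ENNReal.ofReal (3 / 4)
    _ = 1 - ENNReal.ofReal (1 / 4) := by
        rw [← ENNReal.ofReal_one, ← ENNReal.ofReal_sub _ (by norm_num)]
        norm_num
    _ ≤ 1 - volume bad := tsub_le_tsub_left (volume_abs_sum_mul_randomRound_sub_ge_le hM hx) 1
    _ = volume badᶜ := (prob_compl_eq_one_sub measurableSet_bad).symm
    _ ≤ _ := by
        refine measure_mono fun u hu ↦ ?_
        rw [Set.mem_compl_iff, Set.mem_ofPred_eq, not_le, abs_lt] at hu
        have norm_le := sum_sq_randomRound_le x u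
        rw [Set.mem_ofPred_eq]
        linarith [hu.2]

end Concentration

section Counting

lemma map_randomRound_volume (u : ι → I) :
    (volume : Measure (ι → ℝ)).map (randomRound · u) = Measure.count := by
  refine Measure.ext_of_singleton fun y ↦ ?_
  have fiber_eq_box : (randomRound · u) ⁻¹' {y} =
      Set.univ.pi fun i ↦ Set.Ico (y i - u i : ℝ) (y i + 1 - u i) := by
    ext x
    simp only [Set.mem_preimage, Set.mem_singleton_iff, Set.mem_univ_pi, funext_iff, randomRound,
      Int.floor_eq_iff, Set.mem_Ico, sub_le_iff_le_add, lt_sub_iff_add_lt]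
  rw [Measure.map_apply (measurable_randomRound.of_uncurry_right) (.singleton y), fiber_eq_box,
    Real.volume_pi_Ico]
  simp

lemma mul_volume_le_count_of_le_volume_randomRound_mem {A : Set (ι → ℝ)} {S : Set (ι → ℤ)}
    {p : ℝ≥0∞} (h : ∀ x ∈ A, p ≤ volume {u | randomRound x u ∈ S}) :
    p * volume A ≤ Measure.count S := by
  set E := (fun q : (ι → ℝ) × (ι → I) ↦ randomRound q.1 q.2) ⁻¹' S
  have measurableSet_E : MeasurableSet E := measurable_randomRound (.of_discrete (s := S))
  calc p * volume A
    _ = ∫⁻ _ in A, p := (setLIntegral_const A p).symm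
    _ ≤ ∫⁻ x in A, volume {u | randomRound x u ∈ S} :=
        setLIntegral_mono (measurable_measure_prodMk_left measurableSet_E) h
    _ ≤ ∫⁻ x, volume {u | randomRound x u ∈ S} := setLIntegral_le_lintegral A _
    _ = (volume.prod volume) E := (Measure.prod_apply measurableSet_E).symm
    _ = ∫⁻ u, volume {x | randomRound x u ∈ S} := Measure.prod_apply_symm measurableSet_E
    _ = ∫⁻ _ : ι → I, Measure.count S := by
        refine lintegral_congr fun u ↦ ?_
        rw [← map_randomRound_volume u,
          Measure.map_apply measurable_randomRound.of_uncurry_right .of_discrete]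
        rfl
    _ = Measure.count S := by simp

end Counting

end RandomRound

section LatticeBall

variable {ι : Type*} [Fintype ι]

lemma finite_setOfPred_sum_sq_intCast_le (R : ℝ) :
    {y : ι → ℤ | ∑ i, (y i : ℝ) ^ 2 ≤ R}.Finite := by
  refine (isCompact_closedBall (0 : ι → ℤ) √R).finite_of_discrete.subset fun y hy ↦ ?_
  rw [mem_closedBall_zero_iff, pi_norm_le_iff_of_nonneg (Real.sqrt_nonneg R)]
  intro i
  have coord_sq_le : (y i : ℝ) ^ 2 ≤ ∑ j, (y j : ℝ) ^ 2 :=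
    Finset.single_le_sum (f := fun j ↦ (y j : ℝ) ^ 2) (fun j _ ↦ sq_nonneg _) (Finset.mem_univ i)
  rw [Int.norm_eq_abs]
  exact Real.abs_le_sqrt (coord_sq_le.trans hy)

lemma count_setOfPred_sum_sq_intCast_le (R : ℝ) :
    Measure.count {y : ι → ℤ | ∑ i, (y i : ℝ) ^ 2 ≤ R} =
      Nat.card {y : ι → ℤ // ∑ i, (y i : ℝ) ^ 2 ≤ R} := by
  have finite := finite_setOfPred_sum_sq_intCast_le (ι := ι) R
  rw [Measure.count_apply_finite _ finite]
  exact congrArg _ (Nat.card_eq_card_finite_toFinset finite).symm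

lemma volume_setOfPred_sum_sq_le {M : ℝ} (hM : 0 ≤ M) :
    volume {x : ι → ℝ | ∑ i, x i ^ 2 ≤ M ^ 2} =
      volume (Metric.closedBall (0 : EuclideanSpace ℝ ι) M) := by
  rw [← (PiLp.volume_preserving_toLp ι).measure_preimage
    measurableSet_closedBall.nullMeasurableSet, EuclideanSpace.closedBall_zero_eq _ hM]
  rfl

lemma three_quarters_mul_volume_closedBall_le_card {M R : ℝ} (hM : 0 < M)
    (hR : M ^ 2 + 2 * M + Fintype.card ι ≤ R) :
    ENNReal.ofReal (3 / 4) * volume (Metric.closedBall (0 : EuclideanSpace ℝ ι) M) ≤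
      Nat.card {y : ι → ℤ // ∑ i, (y i : ℝ) ^ 2 ≤ R} := by
  rw [← volume_setOfPred_sum_sq_le hM.le, ← count_setOfPred_sum_sq_intCast_le]
  refine mul_volume_le_count_of_le_volume_randomRound_mem fun x hx ↦ ?_
  exact (three_quarters_le_volume_sum_sq_randomRound_le hM hx).trans
    (measure_mono fun u hu ↦ le_trans hu hR)

end LatticeBall

section BallGrowth

variable {E : Type*} [NormedAddCommGroup E] [NormedSpace ℝ E] [FiniteDimensional ℝ E]
  [MeasurableSpace E] [BorelSpace E] (μ : Measure E) [μ.IsAddHaarMeasure] (x : E) {r s : ℝ}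

lemma addHaar_closedBall_add_le_exp_mul (hr : 0 < r) (hs : 0 ≤ s) :
    μ (Metric.closedBall x (r + s)) ≤
      ENNReal.ofReal (Real.exp (Module.finrank ℝ E * (s / r))) * μ (Metric.closedBall x r) := by
  rw [Measure.addHaar_closedBall μ x (by positivity), Measure.addHaar_closedBall μ x hr.le,
    ← mul_assoc, ← ENNReal.ofReal_mul (Real.exp_nonneg _)]
  gcongr
  calc (r + s) ^ Module.finrank ℝ E
    _ = (s / r + 1) ^ Module.finrank ℝ E * r ^ Module.finrank ℝ E := by
        rw [← mul_pow]
        field_simp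
        ring
    _ ≤ Real.exp (s / r) ^ Module.finrank ℝ E * r ^ Module.finrank ℝ E := by
        gcongr
        exact Real.add_one_le_exp _
    _ = Real.exp (Module.finrank ℝ E * (s / r)) * r ^ Module.finrank ℝ E := by
        rw [← Real.exp_nat_mul]

lemma addHaar_closedBall_add_le_three_mul (hr : 0 < r) (hs : 0 ≤ s)
    (hsr : Module.finrank ℝ E * s ≤ r) :
    μ (Metric.closedBall x (r + s)) ≤ ENNReal.ofReal 3 * μ (Metric.closedBall x r) := by
  refine (addHaar_closedBall_add_le_exp_mul μ x hr hs).trans ?_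
  gcongr
  calc Real.exp (Module.finrank ℝ E * (s / r))
    _ ≤ Real.exp 1 := by
        gcongr
        rwa [← mul_div_assoc, div_le_one hr]
    _ ≤ 3 := Real.exp_one_lt_three.le

end BallGrowth

/-- There are absolute constants `C₁, C₂ > 0`, independent of the dimension, such that for
every `d ≥ 1` and every real `N ≥ C₁ d` one has `|B²_N| ≤ C₂ ⋅ #(B²_N ∩ ℤ^d)`. -/
theorem statement18 :
    ∃ C₁ : ℝ, 0 < C₁ ∧ ∃ C₂ : ℝ, 0 < C₂ ∧
      ∀ d : ℕ, 1 ≤ d → ∀ N : ℝ, C₁ * d ≤ N →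
        volume (Metric.closedBall (0 : EuclideanSpace ℝ (Fin d)) N)
          ≤ ENNReal.ofReal C₂ *
            (Nat.card {y : Fin d → ℤ // (∑ i, ((y i : ℝ)) ^ 2) ≤ N ^ 2} : ℝ≥0∞) := by
  refine ⟨4, by norm_num, 4, by norm_num, fun d hd N hN ↦ ?_⟩
  have one_le_d : (1 : ℝ) ≤ d := by exact_mod_cast hd
  have M_pos : 0 < N - 2 := by linarith
  calc volume (Metric.closedBall (0 : EuclideanSpace ℝ (Fin d)) N)
    _ = volume (Metric.closedBall (0 : EuclideanSpace ℝ (Fin d)) (N - 2 + 2)) := by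
        rw [sub_add_cancel]
    _ ≤ ENNReal.ofReal 3 * volume (Metric.closedBall (0 : EuclideanSpace ℝ (Fin d)) (N - 2)) := by
        refine addHaar_closedBall_add_le_three_mul volume 0 M_pos zero_le_two ?_
        rw [finrank_euclideanSpace_fin]
        linarith
    _ = ENNReal.ofReal 4 * (ENNReal.ofReal (3 / 4) *
          volume (Metric.closedBall (0 : EuclideanSpace ℝ (Fin d)) (N - 2))) := by
        rw [← mul_assoc, ← ENNReal.ofReal_mul (by norm_num)]
        norm_num
    _ ≤ _ := by
        gcongr
        refine three_quarters_mul_volume_closedBall_le_card M_pos ?_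
        rw [Fintype.card_fin]
        linarith
end
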